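/- arXiv:1106.2336 — 5 statements merged into one kernel-verified Lean document; each statement's English description precedes it below -/
import Mathlib

section
/- Let O ⊆ ℝ × ℝ be an open set that is invariant under the unit translation in the second coordinate (p ∈ O implies (p.1, p.2 + 1) ∈ O and (p.1, p.2 − 1) ∈ O) and that contains the line {p : ℝ × ℝ | p.1 = 0}. Then there exists a field T : ℝ × ℝ → Matrix (Fin 2) (Fin 2) ℝ which is smooth (ContDiff ℝ ⊤), satisfies T (p.1, p.2 + 1) = T p for all p, takes symmetric-matrix values at every point, has vanishing coordinate divergence (for every p and every b, fderiv ℝ (fun q => T q 0 b) p (1,0) + fderiv ℝ (fun q => T q 1 b) p (0,1) = 0), has support contained in O (the closure of {p | T p ≠ 0} is contained in O), is nonzero at at least one point, and satisfies the weak energy condition at every point: for every p and every covector ξ : Fin 2 → ℝ with (ξ 0)^2 − (ξ 1)^2 > 0, one has ∑ a, ∑ b, T p a b * ξ a * ξ b ≥ 0. -/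
attribute [local instance] Matrix.normedAddCommGroup Matrix.normedSpace

/-- Proposition 1 of the paper in coordinates on the cylinder: in any open,
unit-translation-invariant neighborhood of the closed spacelike curve `t = 0`
there is a smooth, periodic, symmetric, conserved energy-momentum field,
supported in the neighborhood and nonvanishing, satisfying the weak energy
condition for the Minkowski metric `diag(1,-1)`. -/
theorem weak_energy_condition_insufficient
    (O : Set (ℝ × ℝ)) (hO : IsOpen O)
    (hinv : ∀ p ∈ O, (p.1, p.2 + 1) ∈ O ∧ (p.1, p.2 - 1) ∈ O)
    (hline : {p : ℝ × ℝ | p.1 = 0} ⊆ O) :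
    ∃ T : ℝ × ℝ → Matrix (Fin 2) (Fin 2) ℝ,
      ContDiff ℝ (⊤ : ℕ∞) T ∧
      (∀ p : ℝ × ℝ, T (p.1, p.2 + 1) = T p) ∧
      (∀ p : ℝ × ℝ, (T p).IsSymm) ∧
      (∀ p : ℝ × ℝ, ∀ b : Fin 2,
        fderiv ℝ (fun q => T q 0 b) p (1, 0) + fderiv ℝ (fun q => T q 1 b) p (0, 1) = 0) ∧
      closure {p : ℝ × ℝ | T p ≠ 0} ⊆ O ∧
      (∃ p : ℝ × ℝ, T p ≠ 0) ∧
      (∀ p : ℝ × ℝ, ∀ ξ : Fin 2 → ℝ, (ξ 0) ^ 2 - (ξ 1) ^ 2 > 0 →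
        ∑ a, ∑ b, T p a b * ξ a * ξ b ≥ 0) := by
  classical
  -- a strip around the line `t = 0` inside `O`
  have hsub : ({0} : Set ℝ) ×ˢ (Set.Icc (0 : ℝ) 1) ⊆ O := by
    rintro ⟨t, x⟩ ⟨h1, -⟩
    exact hline h1
  obtain ⟨u, v, hu, -, h0u, hIv, huv⟩ :=
    generalized_tube_lemma isCompact_singleton isCompact_Icc hO hsub
  have h0 : (0 : ℝ) ∈ u := h0u rfl
  obtain ⟨e, he, heu⟩ := Metric.nhds_basis_closedBall.mem_iff.1 (hu.mem_nhds h0)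
  have hnat : ∀ n : ℕ, ∀ t x : ℝ, (t, x) ∈ O → (t, x + n) ∈ O ∧ (t, x - n) ∈ O := by
    intro n
    induction n with
    | zero => intro t x h; simpa using h
    | succ k ih =>
      intro t x h
      have h1 := (hinv _ (ih t x h).1).1
      have h2 := (hinv _ (ih t x h).2).2
      push_cast
      constructor
      · rw [← add_assoc]; exact h1
      · rw [← sub_sub]; exact h2
  have hint : ∀ n : ℤ, ∀ t x : ℝ, (t, x) ∈ O → (t, x + n) ∈ O := by
    intro n t x h
    obtain ⟨k, rfl | rfl⟩ := n.eq_nat_or_neg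
    · simpa using (hnat k t x h).1
    · simpa [sub_eq_add_neg] using (hnat k t x h).2
  have hstrip : ∀ t x : ℝ, t ∈ Metric.closedBall (0 : ℝ) e → (t, x) ∈ O := by
    intro t x ht
    have h1 : (t, Int.fract x) ∈ O :=
      huv ⟨heu ht, hIv ⟨Int.fract_nonneg x, (Int.fract_lt_one x).le⟩⟩
    have h2 := hint ⌊x⌋ _ _ h1
    rwa [Int.fract_add_floor] at h2
  let f : ContDiffBump (0 : ℝ) := ⟨e / 2, e, by positivity, by linarith⟩
  let M : Matrix (Fin 2) (Fin 2) ℝ := !![0, 0; 0, 1]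
  refine ⟨fun p => f p.1 • M, ?_, ?_, ?_, ?_, ?_, ?_, ?_⟩
  · exact (f.contDiff.comp contDiff_fst).smul contDiff_const
  · intro p; rfl
  · intro p
    ext i j
    fin_cases i <;> fin_cases j <;> simp [M]
  · intro p b
    have hd : HasFDerivAt (fun q : ℝ × ℝ => f q.1)
        ((fderiv ℝ f p.1).comp (ContinuousLinearMap.fst ℝ ℝ ℝ)) p :=
      ((f.contDiff (n := 1)).differentiable one_ne_zero p.1).hasFDerivAt.comp p hasFDerivAt_fst
    fin_cases b
    · simp [M]
    · simp [M, hd.fderiv]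
  · have hc : IsClosed {p : ℝ × ℝ | p.1 ∈ Metric.closedBall (0 : ℝ) e} :=
      Metric.isClosed_closedBall.preimage continuous_fst
    refine (closure_minimal ?_ hc).trans (fun p hp => hstrip p.1 p.2 hp)
    intro p hp
    by_contra hne
    apply hp
    have hz : f p.1 = 0 := by
      apply f.zero_of_le_dist
      have : ¬ dist p.1 0 ≤ e := hne
      exact (not_le.1 this).le
    simp [hz]
  · refine ⟨(0, 0), fun h => ?_⟩
    have h1 := congrFun (congrFun h 1) 1
    have h2 : f 0 = 1 := f.one_of_mem_closedBall (Metric.mem_closedBall_self f.rIn_pos.le)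
    simp [M, h2] at h1
  · intro p ξ _
    have h1 : 0 ≤ f p.1 := f.nonneg
    simp [M, Fin.sum_univ_two]
    rw [mul_assoc]
    exact mul_nonneg h1 (mul_self_nonneg _)
end

section
/- Let O ⊆ ℝ × ℝ be an open set that is invariant under the unit translation in the second coordinate (p ∈ O implies (p.1, p.2 + 1) ∈ O and (p.1, p.2 − 1) ∈ O) and that contains the line {p : ℝ × ℝ | p.1 = 0}. Then there exists a field T : ℝ × ℝ → Matrix (Fin 2) (Fin 2) ℝ which is smooth (ContDiff ℝ ⊤), satisfies T (p.1, p.2 + 1) = T p for all p, takes symmetric-matrix values at every point, has vanishing coordinate divergence (for every p and every b, fderiv ℝ (fun q => T q 0 b) p (1,0) + fderiv ℝ (fun q => T q 1 b) p (0,1) = 0), has support contained in O (the closure of {p | T p ≠ 0} is contained in O), is nonzero at at least one point, and satisfies the strict dominant energy condition with respect to g′ at every point: for every p, either T p = 0, or for all covectors ξ, ζ : Fin 2 → ℝ with ξ 0 * ξ 1 > 0, ζ 0 * ζ 1 > 0, and ξ 0 * ζ 1 + ξ 1 * ζ 0 > 0, one has ∑ a, ∑ b, T p a b * ξ a * ζ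 b > 0. -/
attribute [local instance] Matrix.normedAddCommGroup Matrix.normedSpace

/-- Proposition 2 of the paper in coordinates on the cylinder: in any open,
unit-translation-invariant neighborhood of the closed curve `t = 0` (which is
null for the metric `g′(u,v) = (u 0 * v 1 + u 1 * v 0)/2`) there is a smooth,
periodic, symmetric, conserved energy-momentum field, supported in the
neighborhood and nonvanishing, satisfying the strict dominant energy condition
with respect to `g′`. -/
theorem strict_dominant_energy_condition_insufficient
    (O : Set (ℝ × ℝ)) (hO : IsOpen O)
    (hinv : ∀ p ∈ O, (p.1, p.2 + 1) ∈ O ∧ (p.1, p.2 - 1) ∈ O)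
    (hline : {p : ℝ × ℝ | p.1 = 0} ⊆ O) :
    ∃ T : ℝ × ℝ → Matrix (Fin 2) (Fin 2) ℝ,
      ContDiff ℝ (⊤ : ℕ∞) T ∧
      (∀ p : ℝ × ℝ, T (p.1, p.2 + 1) = T p) ∧
      (∀ p : ℝ × ℝ, (T p).IsSymm) ∧
      (∀ p : ℝ × ℝ, ∀ b : Fin 2,
        fderiv ℝ (fun q => T q 0 b) p (1, 0) + fderiv ℝ (fun q => T q 1 b) p (0, 1) = 0) ∧
      closure {p : ℝ × ℝ | T p ≠ 0} ⊆ O ∧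
      (∃ p : ℝ × ℝ, T p ≠ 0) ∧
      (∀ p : ℝ × ℝ, T p = 0 ∨
        ∀ ξ ζ : Fin 2 → ℝ, ξ 0 * ξ 1 > 0 → ζ 0 * ζ 1 > 0 →
          ξ 0 * ζ 1 + ξ 1 * ζ 0 > 0 →
          ∑ a, ∑ b, T p a b * ξ a * ζ b > 0) := by
  classical
  -- integer translations
  have hnat : ∀ (n : ℕ) (t x : ℝ), (t, x) ∈ O → (t, x + n) ∈ O ∧ (t, x - n) ∈ O := by
    intro n
    induction n with
    | zero => intro t x h; simpa using h
    | succ k ih =>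
      intro t x h
      have h1 := (hinv _ (ih t x h).1).1
      have h2 := (hinv _ (ih t x h).2).2
      refine ⟨?_, ?_⟩
      · convert h1 using 2; push_cast; ring
      · convert h2 using 2; push_cast; ring
  have hint : ∀ (n : ℤ) (t x : ℝ), (t, x) ∈ O → (t, x + n) ∈ O := by
    intro n t x h
    obtain ⟨k, rfl | rfl⟩ := n.eq_nat_or_neg
    · simpa using (hnat k t x h).1
    · simpa [sub_eq_add_neg] using (hnat k t x h).2
  obtain ⟨u, v, hu, hv, hu0, hvI, huv⟩ := generalized_tube_lemma
    (isCompact_singleton (x := (0 : ℝ))) (isCompact_Icc (a := (0 : ℝ)) (b := 1))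
    (n := O) hO (by rintro ⟨t, x⟩ ⟨ht, -⟩; exact hline ht)
  have hstrip : ∀ t ∈ u, ∀ x : ℝ, (t, x) ∈ O := by
    intro t ht x
    have h1 : (t, Int.fract x) ∈ O :=
      huv ⟨ht, hvI ⟨Int.fract_nonneg x, (Int.fract_lt_one x).le⟩⟩
    have h2 := hint ⌊x⌋ t _ h1
    rwa [Int.fract_add_floor] at h2
  obtain ⟨φ, hsupp, -, hsm, hr, h0⟩ := exists_contDiff_tsupport_subset (E := ℝ) (n := (⊤ : ℕ∞))
    (hu.mem_nhds (hu0 rfl))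
  have hz : ∀ p : ℝ × ℝ, φ p.1 = 0 → φ p.1 • (!![0, 0; 0, 1] : Matrix (Fin 2) (Fin 2) ℝ) = 0 := by
    intro p h; rw [h, zero_smul]
  refine ⟨fun p => φ p.1 • !![0, 0; 0, 1], ?_, ?_, ?_, ?_, ?_, ?_, ?_⟩
  · exact (hsm.comp contDiff_fst).smul contDiff_const
  · intro p; rfl
  · intro p
    ext i j
    fin_cases i <;> fin_cases j <;> simp
  · intro p b
    have hd : DifferentiableAt ℝ φ p.1 := (hsm.differentiable (by simp)) _
    have hf : fderiv ℝ (fun q : ℝ × ℝ => φ q.1) p (0, 1) = 0 := by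
      have h := hd.hasFDerivAt.comp p (hasFDerivAt_fst (𝕜 := ℝ) (p := p))
      have h' : fderiv ℝ (fun q : ℝ × ℝ => φ q.1) p = _ := h.fderiv
      rw [h']; simp
    fin_cases b
    · simp
    · simpa using hf
  · have hcl : IsClosed {p : ℝ × ℝ | p.1 ∈ tsupport φ} :=
      (isClosed_tsupport φ).preimage continuous_fst
    refine (closure_minimal ?_ hcl).trans ?_
    · intro p hp
      exact subset_tsupport φ (fun h => hp (hz p h))
    · rintro ⟨t, x⟩ hp
      exact hstrip t (hsupp hp) x
  · refine ⟨(0, 0), fun h => ?_⟩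
    have := congrFun (congrFun h 1) 1
    simp [h0] at this
  · intro p
    by_cases h : φ p.1 = 0
    · exact Or.inl (hz p h)
    · right
      intro ξ ζ h1 h2 h3
      have hpos : 0 < φ p.1 := lt_of_le_of_ne (hr ⟨p.1, rfl⟩).1 (Ne.symm h)
      have hm : 0 < ξ 1 * ζ 1 := by
        rcases pos_and_pos_or_neg_and_neg_of_mul_pos h1 with ⟨a, b⟩ | ⟨a, b⟩ <;>
        rcases pos_and_pos_or_neg_and_neg_of_mul_pos h2 with ⟨c, d⟩ | ⟨c, d⟩
        · exact mul_pos b d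
        · nlinarith [mul_neg_of_pos_of_neg a d, mul_neg_of_pos_of_neg b c]
        · nlinarith [mul_neg_of_neg_of_pos a d, mul_neg_of_neg_of_pos b c]
        · exact mul_pos_of_neg_of_neg b d
      have := mul_pos hpos hm
      simpa [Fin.sum_univ_two, mul_assoc] using this
end

section
/- Let γ : ℝ → (Fin 4 → ℝ) be any smooth injective curve in 4-dimensional Minkowski spacetime whose tangent is everywhere timelike: for all s, η₄(γ′(s), γ′(s)) > 0, where γ′(s) = deriv γ s. Then for every open set O ⊆ (Fin 4 → ℝ) containing the range of γ, there exists a field T : (Fin 4 → ℝ) → Matrix (Fin 4) (Fin 4) ℝ which is smooth (ContDiff ℝ ⊤), takes symmetric-matrix values at every point, has vanishing coordinate divergence (for every p and every b, ∑ a, fderiv ℝ (fun q => T q a b) p (Pi.single a 1) = 0), has support contained in O (the closure of {p | T p ≠ 0} is contained in O), and is nonzero at at least one point of O. -/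
attribute [local instance] Matrix.normedAddCommGroup Matrix.normedSpace

/-- The Minkowski inner product on `ℝ⁴ = Fin 4 → ℝ` in inertial coordinates. -/
def η₄ (u v : Fin 4 → ℝ) : ℝ :=
  u 0 * v 0 - u 1 * v 1 - u 2 * v 2 - u 3 * v 3

/-- Coordinate partial derivative. -/
noncomputable def pd (a : Fin 4) (f : (Fin 4 → ℝ) → ℝ) (p : Fin 4 → ℝ) : ℝ :=
  fderiv ℝ f p (Pi.single a 1)

theorem pd_smooth (a : Fin 4) {f : (Fin 4 → ℝ) → ℝ} (hf : ContDiff ℝ (⊤ : ℕ∞) f) :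
    ContDiff ℝ (⊤ : ℕ∞) (pd a f) := by
  have h : ContDiff ℝ (⊤ : ℕ∞) (fderiv ℝ f) := hf.fderiv_right (by simp)
  exact h.clm_apply contDiff_const

theorem pd_tsupport (a : Fin 4) (f : (Fin 4 → ℝ) → ℝ) : tsupport (pd a f) ⊆ tsupport f := by
  refine closure_minimal ?_ (isClosed_tsupport f)
  intro p hp
  apply support_fderiv_subset ℝ (f := f)
  intro h0
  apply hp
  simp [pd, h0]

theorem pd_comm (a b : Fin 4) {f : (Fin 4 → ℝ) → ℝ} (hf : ContDiff ℝ (⊤ : ℕ∞) f) :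
    pd a (pd b f) = pd b (pd a f) := by
  have hd : Differentiable ℝ (fderiv ℝ f) :=
    (hf.fderiv_right (m := (⊤ : ℕ∞)) (by simp)).differentiable (by simp)
  have key : ∀ (a b : Fin 4) (p : Fin 4 → ℝ), pd a (pd b f) p =
      fderiv ℝ (fderiv ℝ f) p (Pi.single a 1) (Pi.single b 1) := by
    intro a b p
    have h := ((hd p).hasFDerivAt.clm_apply
      (hasFDerivAt_const (Pi.single b (1 : ℝ) : Fin 4 → ℝ) p)).fderiv
    change fderiv ℝ (fun q => fderiv ℝ f q (Pi.single b 1)) p _ = _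
    rw [h]
    simp
  funext p
  rw [key, key]
  have hs : IsSymmSndFDerivAt ℝ f p := hf.contDiffAt.isSymmSndFDerivAt (by
    simp only [minSmoothness_of_isRCLikeNormedField]
    exact WithTop.coe_le_coe.2 (le_top : (2 : ℕ∞) ≤ ⊤))
  exact hs.eq _ _

theorem pd_neg (a : Fin 4) (f : (Fin 4 → ℝ) → ℝ) (p : Fin 4 → ℝ) :
    pd a (fun q => - f q) p = - pd a f p := by
  simp [pd, fderiv_fun_neg]

theorem pd_zero (a : Fin 4) (p : Fin 4 → ℝ) : pd a (fun _ => 0) p = 0 := by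
  simp [pd]

theorem eq_zero_of_pd (a : Fin 4) {f : (Fin 4 → ℝ) → ℝ} (hf : ContDiff ℝ (⊤ : ℕ∞) f)
    (hc : HasCompactSupport f) (h : ∀ p, pd a f p = 0) (p : Fin 4 → ℝ) : f p = 0 := by
  have hd : ∀ t : ℝ, HasDerivAt (fun t : ℝ => f (p + t • Pi.single a 1)) 0 t := by
    intro t
    have h1 : HasDerivAt (fun t : ℝ => p + t • (Pi.single a 1 : Fin 4 → ℝ))
        (Pi.single a 1) t := by
      simpa using ((hasDerivAt_id t).smul_const (Pi.single a 1 : Fin 4 → ℝ)).const_add p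
    have h2 := ((hf.differentiable (by simp) (p + t • Pi.single a 1)).hasFDerivAt).comp_hasDerivAt
      t h1
    have h3 := h (p + t • Pi.single a 1)
    rw [pd] at h3
    rw [h3] at h2
    exact h2
  have hconst := is_const_of_deriv_eq_zero (fun t => (hd t).differentiableAt)
    (fun t => (hd t).deriv)
  obtain ⟨R, hR⟩ := hc.isCompact.isBounded.exists_norm_le
  by_contra hne
  have hall : ∀ t : ℝ, f (p + t • Pi.single a 1) = f p := by
    intro t
    simpa using hconst t 0
  have hmem := hR (p + (R + |p a| + 1) • Pi.single a 1) (subset_tsupport f (by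
    rw [Function.mem_support, hall]; exact hne))
  have := (norm_le_pi_norm (p + (R + |p a| + 1) • (Pi.single a 1 : Fin 4 → ℝ)) a).trans hmem
  simp at this
  have h4 := (le_abs_self _).trans this
  linarith [neg_abs_le (p a)]

/-- The conserved tensor built from a potential `f`. -/
noncomputable def potT (f : (Fin 4 → ℝ) → ℝ) (p : Fin 4 → ℝ) : Matrix (Fin 4) (Fin 4) ℝ :=
  !![pd 1 (pd 1 f) p, - pd 0 (pd 1 f) p, 0, 0;
     - pd 0 (pd 1 f) p, pd 0 (pd 0 f) p, 0, 0;
     0, 0, 0, 0;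
     0, 0, 0, 0]

/-- Malament's proposition (Theorem 2 of the paper) in coordinates: for any smooth
injective timelike curve in Minkowski spacetime and any open neighborhood `O` of its
range, there is a smooth symmetric field `T` satisfying conditions (2)–(4) of the
Geroch–Jang theorem (conservation, support in `O`, nonvanishing) relative to `O`. -/
theorem malament_no_energy_condition
    (γ : ℝ → (Fin 4 → ℝ)) (hγ : ContDiff ℝ (⊤ : ℕ∞) γ) (hinj : Function.Injective γ)
    (htimelike : ∀ s : ℝ, η₄ (deriv γ s) (deriv γ s) > 0)
    (O : Set (Fin 4 → ℝ)) (hO : IsOpen O) (hrange : Set.range γ ⊆ O) :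
    ∃ T : (Fin 4 → ℝ) → Matrix (Fin 4) (Fin 4) ℝ,
      ContDiff ℝ (⊤ : ℕ∞) T ∧
      (∀ p : Fin 4 → ℝ, (T p).IsSymm) ∧
      (∀ p : Fin 4 → ℝ, ∀ b : Fin 4,
        ∑ a, fderiv ℝ (fun q => T q a b) p (Pi.single a 1) = 0) ∧
      closure {p : Fin 4 → ℝ | T p ≠ 0} ⊆ O ∧
      (∃ p ∈ O, T p ≠ 0) := by
  have hO' : O ∈ nhds (γ 0) := hO.mem_nhds (hrange ⟨0, rfl⟩)
  obtain ⟨f, hfs, hfc, hf, -, hf1⟩ := exists_contDiff_tsupport_subset (n := (⊤ : ℕ∞)) hO'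
  have hsm : ∀ a b, ContDiff ℝ (⊤ : ℕ∞) (pd a (pd b f)) := fun a b => pd_smooth a (pd_smooth b hf)
  have hsub : ∀ a b, tsupport (pd a (pd b f)) ⊆ tsupport f := fun a b =>
    (pd_tsupport a _).trans (pd_tsupport b _)
  have hz : ∀ a b p, p ∉ tsupport f → pd a (pd b f) p = 0 := fun a b p hp =>
    image_eq_zero_of_notMem_tsupport (fun h => hp (hsub a b h))
  have hsupp : {p : Fin 4 → ℝ | potT f p ≠ 0} ⊆ tsupport f := by
    intro p hp
    by_contra hn
    apply hp
    ext i j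
    fin_cases i <;> fin_cases j <;> simp [potT, hz _ _ p hn]
  refine ⟨potT f, ?_, ?_, ?_, ?_, ?_⟩
  · refine contDiff_pi.2 fun i => contDiff_pi.2 fun j => ?_
    fin_cases i <;> fin_cases j <;> simp [potT] <;>
      first | exact contDiff_const | exact hsm _ _ | exact (hsm _ _).neg
  · intro p
    ext i j
    fin_cases i <;> fin_cases j <;> simp [potT]
  · intro p b
    change ∑ a, pd a (fun q => potT f q a b) p = 0
    have e1 : pd 1 (pd 0 (pd 1 f)) = pd 0 (pd 1 (pd 1 f)) := pd_comm 1 0 (pd_smooth 1 hf)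
    have e2 : pd 1 (pd 0 (pd 0 f)) = pd 0 (pd 0 (pd 1 f)) := by
      rw [pd_comm 1 0 (pd_smooth 0 hf), pd_comm 1 0 hf]
    have e1p : pd 1 (fun q => pd 0 (pd 1 f) q) p = _ := congrFun e1 p
    have e2p : pd 1 (fun q => pd 0 (pd 0 f) q) p = _ := congrFun e2 p
    fin_cases b <;> simp [Fin.sum_univ_four, potT, pd_neg, pd_zero, e1p, e2p]
  · exact (closure_minimal hsupp (isClosed_tsupport f)).trans hfs
  · by_contra! hcon
    have hall : ∀ p, potT f p = 0 := by
      intro p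
      by_contra hn
      exact hn (hcon p (hfs (hsupp hn)))
    have h00 : ∀ p, pd 1 (pd 1 f) p = 0 := by
      intro p
      have := congrFun (congrFun (hall p) 0) 0
      simpa [potT] using this
    have hc1 : HasCompactSupport (pd 1 f) :=
      hfc.of_isClosed_subset (isClosed_tsupport _) (pd_tsupport 1 f)
    have h1 := eq_zero_of_pd 1 (pd_smooth 1 hf) hc1 h00
    have h2 := eq_zero_of_pd 1 hf hfc h1 (γ 0)
    rw [hf1] at h2
    exact one_ne_zero h2
end

section
/- Let T : Matrix (Fin 4) (Fin 4) ℝ be symmetric (T.IsSymm) and suppose T satisfies the strengthened dominant energy condition: for every covector ξ : Fin 4 → ℝ with η₄(ξ,ξ) > 0, one has ∑ a, ∑ b, T a b * ξ a * ξ b ≥ 0, and either T = 0 or η₄(T.mulVec ξ, T.mulVec ξ) > 0. Then T satisfies the strict dominant energy condition: for every pair of covectors ξ, ζ : Fin 4 → ℝ with η₄(ξ,ξ) > 0, ξ 0 > 0, η₄(ζ,ζ) > 0, ζ 0 > 0, either T = 0 or ∑ a, ∑ b, T a b * ξ a * ζ b > 0. -/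
theorem eta_pair_pos (u v : Fin 4 → ℝ) (hu : η₄ u u > 0) (hu0 : u 0 > 0)
    (hv : η₄ v v > 0) (hv0 : v 0 > 0) :
    u 0 * v 0 + u 1 * v 1 + u 2 * v 2 + u 3 * v 3 > 0 := by
  unfold η₄ at hu hv
  have hp : 0 < u 0 * v 0 := mul_pos hu0 hv0
  have hcs : (u 1 * v 1 + u 2 * v 2 + u 3 * v 3) ^ 2 ≤
      (u 1 ^ 2 + u 2 ^ 2 + u 3 ^ 2) * (v 1 ^ 2 + v 2 ^ 2 + v 3 ^ 2) := by
    nlinarith [sq_nonneg (u 1 * v 2 - u 2 * v 1), sq_nonneg (u 1 * v 3 - u 3 * v 1),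
      sq_nonneg (u 2 * v 3 - u 3 * v 2)]
  have hlt : (u 1 ^ 2 + u 2 ^ 2 + u 3 ^ 2) * (v 1 ^ 2 + v 2 ^ 2 + v 3 ^ 2) <
      u 0 ^ 2 * v 0 ^ 2 := by
    apply mul_lt_mul'' <;> first | positivity | nlinarith
  have h := abs_lt_of_sq_lt_sq (a := u 1 * v 1 + u 2 * v 2 + u 3 * v 3) (b := u 0 * v 0)
    (by rw [mul_pow]; exact lt_of_le_of_lt hcs hlt) hp.le
  linarith [(abs_lt.mp h).1]

/-- The strengthened dominant energy condition implies the strict dominant energy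
condition. -/
theorem strengthened_dec_implies_strict_dec
    (T : Matrix (Fin 4) (Fin 4) ℝ) (hT : T.IsSymm)
    (hsdec : ∀ ξ : Fin 4 → ℝ, η₄ ξ ξ > 0 →
        (∑ a, ∑ b, T a b * ξ a * ξ b ≥ 0) ∧
        (T = 0 ∨ η₄ (T.mulVec ξ) (T.mulVec ξ) > 0)) :
    ∀ ξ ζ : Fin 4 → ℝ, η₄ ξ ξ > 0 → ξ 0 > 0 → η₄ ζ ζ > 0 → ζ 0 > 0 →
        (T = 0 ∨ ∑ a, ∑ b, T a b * ξ a * ζ b > 0) := by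
  intro ξ ζ hξ hξ0 hζ hζ0
  obtain ⟨hnn, h0 | ht⟩ := hsdec ξ hξ
  · exact Or.inl h0
  right
  have key : ∀ w : Fin 4 → ℝ, ∑ a, ∑ b, T a b * ξ a * w b =
      (T.mulVec ξ) 0 * w 0 + (T.mulVec ξ) 1 * w 1 + (T.mulVec ξ) 2 * w 2 +
        (T.mulVec ξ) 3 * w 3 := by
    intro w
    simp only [Matrix.mulVec, dotProduct, Fin.sum_univ_four]
    rw [hT.apply 0 1, hT.apply 0 2, hT.apply 0 3, hT.apply 1 2, hT.apply 1 3, hT.apply 2 3]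
    ring
  rw [key] at hnn ⊢
  generalize T.mulVec ξ = v at *
  apply eta_pair_pos v ζ ht _ hζ hζ0
  by_contra hneg
  rcases lt_or_eq_of_le (not_lt.mp hneg) with h | h
  · have := eta_pair_pos (-v) ξ (by simpa [η₄] using ht) (by simpa using h) hξ hξ0
    simp only [Pi.neg_apply] at this
    linarith
  · unfold η₄ at ht
    rw [h] at ht
    nlinarith [sq_nonneg (v 1), sq_nonneg (v 2), sq_nonneg (v 3)]
end

section
/- Let n : Fin 2 → ℝ be the null covector n = ![1, 1] (so η₂(n,n) = 0 and n 0 > 0), and let T : Matrix (Fin 2) (Fin 2) ℝ be defined by T a b = n a * n b. Then: (i) T ≠ 0; (ii) T satisfies the strict dominant energy condition: for all covectors ξ, ζ : Fin 2 → ℝ with η₂(ξ,ξ) > 0, ξ 0 > 0, η₂(ζ,ζ) > 0, ζ 0 > 0, one has ∑ a, ∑ b, T a b * ξ a * ζ b = (ξ 0 + ξ 1) * (ζ 0 + ζ 1) > 0; but (iii) T fails the strengthened dominant energy condition: for every covector ξ with η₂(ξ,ξ) > 0, the vector T.mulVec ξ satisfies η₂(T.mulVec ξ, T.mulVec ξ)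 = 0, so T.mulVec ξ is never timelike even though T ≠ 0. -/
/-- The 2-dimensional Minkowski inner product on `ℝ² = Fin 2 → ℝ`
(the inverse metric has the same components, so the same formula measures covectors). -/
def η₂ (u v : Fin 2 → ℝ) : ℝ :=
  u 0 * v 0 - u 1 * v 1

/-- The tensor `T^{ab} = n^a n^b` built from the null covector `n = ![1, 1]` is nonzero,
satisfies the strict dominant energy condition, but fails the strengthened dominant
energy condition: `T.mulVec ξ` is never timelike. -/
theorem strict_dec_strictly_weaker_than_strengthened_dec :
    ∀ n : Fin 2 → ℝ, n = ![1, 1] →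
    ∀ T : Matrix (Fin 2) (Fin 2) ℝ, (∀ a b : Fin 2, T a b = n a * n b) →
    (η₂ n n = 0 ∧ n 0 > 0) ∧
    T ≠ 0 ∧
    (∀ ξ ζ : Fin 2 → ℝ, η₂ ξ ξ > 0 → ξ 0 > 0 → η₂ ζ ζ > 0 → ζ 0 > 0 →
      (∑ a, ∑ b, T a b * ξ a * ζ b) = (ξ 0 + ξ 1) * (ζ 0 + ζ 1) ∧
      (ξ 0 + ξ 1) * (ζ 0 + ζ 1) > 0) ∧
    (∀ ξ : Fin 2 → ℝ, η₂ ξ ξ > 0 →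
      η₂ (T.mulVec ξ) (T.mulVec ξ) = 0 ∧ ¬ η₂ (T.mulVec ξ) (T.mulVec ξ) > 0) := by
  intro n hn T hT
  have hT1 : ∀ a b : Fin 2, T a b = 1 := by
    intro a b
    rw [hT, hn]
    fin_cases a <;> fin_cases b <;> simp
  have key : ∀ ξ : Fin 2 → ℝ, η₂ ξ ξ > 0 → ξ 0 > 0 → 0 < ξ 0 + ξ 1 := by
    intro ξ h h0
    unfold η₂ at h
    by_contra hc
    push Not at hc
    have h1 : 0 ≤ ξ 0 - ξ 1 := by linarith
    nlinarith [mul_nonneg (neg_nonneg.mpr hc) h1]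
  have hnull : ∀ ξ : Fin 2 → ℝ, η₂ (T.mulVec ξ) (T.mulVec ξ) = 0 := by
    intro ξ
    simp [η₂, Matrix.mulVec, dotProduct, hT1]
  refine ⟨⟨by simp [η₂, hn], by simp [hn]⟩, ?_, ?_, ?_⟩
  · intro h
    have := hT1 0 0
    simp [h] at this
  · intro ξ ζ h1 h2 h3 h4
    refine ⟨?_, mul_pos (key ξ h1 h2) (key ζ h3 h4)⟩
    simp only [hT1, Fin.sum_univ_two]
    ring
  · intro ξ _
    exact ⟨hnull ξ, by rw [hnull ξ]; exact lt_irrefl _⟩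
end
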